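/- P takes real values on [0,ω] and on i[0,π]; moreover P(σ) < 0 for every σ ∈ (0, ω], and P(it) > 0 for every t ∈ (0, π]. -/

import Mathlib

/-!
Let `c = ω + πi`. The key fact is that `℘` takes the value `e₂ = ℘(c)` only on `c + Λ`. Indeed
`℘'² = 4℘³ - g₂℘ - g₃` and `℘'(c) = 0` give `℘'(z) = 0` whenever `℘(z) = e₂`; since
`℘'' = 6℘² - g₂/2` determines a solution from its initial data, `z - c` is then a period of `℘`,
hence a lattice point (`PeriodPair.sub_mem_lattice_of_eq_half_period`).

On the boundary of the rectangle `0, ω, ω + πi, πi` the function `℘` is real, because `Λ` is stable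
under conjugation and negation. Along the path `0 → ω → ω + πi` it starts at `+∞` (as `℘(z) ~ 1/z²`)
and does not meet the value `e₂` before the endpoint, so it stays above `e₂`. Along
`0 → πi → ω + πi` it starts at `-∞` and stays below `e₂`. Evenness and periodicity of `℘` carry
these two facts over to the segments on which `P` is evaluated.
-/

open Complex

noncomputable section

/-- The lattice `Λ = {2mω + 2nω' : m, n ∈ ℤ}` with `ω' = πi`. -/
def latticeΛ (ω : ℝ) : Set ℂ :=
  {z | ∃ m n : ℤ, z = 2 * m * ω + 2 * n * (Real.pi * Complex.I)}

/-- The Weierstrass elliptic function of the lattice `Λ`: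
`℘(z) = 1/z² + Σ_{0 ≠ w ∈ Λ} (1/(z−w)² − 1/w²)`. -/
def wp (ω : ℝ) (z : ℂ) : ℂ :=
  1 / z^2 + ∑' w : {w : ℂ // w ∈ latticeΛ ω ∧ w ≠ 0}, (1 / (z - (w:ℂ))^2 - 1 / (w:ℂ)^2)

/-- `P(ζ) = (℘(ζ + ω + ω') − e₂)/4` where `e₂ = ℘(ω + ω')`, `ω' = πi`. -/
def Pfun (ω : ℝ) (ζ : ℂ) : ℂ :=
  (wp ω (ζ + ω + Real.pi * Complex.I) - wp ω (ω + Real.pi * Complex.I)) / 4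

section
open Filter Topology

/-! ### Injectivity of `(℘, ℘')` modulo the lattice -/

namespace PeriodPair
variable (L : PeriodPair)

lemma countable_lattice_set : (L.lattice : Set ℂ).Countable :=
  countable_of_Lindelof_of_discrete (X := L.lattice)

lemma isConnected_compl_lattice : IsConnected (L.lattice : Set ℂ)ᶜ :=
  L.countable_lattice_set.isConnected_compl_of_one_lt_rank (by simp)

/-- Splitting off the principal part of `℘` at the origin. -/
lemma weierstrassP_eq_except_zero_add (z : ℂ) :
    L.weierstrassP z = L.weierstrassPExcept 0 z + 1 / z ^ 2 := by
  simpa using (L.weierstrassPExcept_add 0 z).symm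

lemma tendsto_weierstrassP_mul_sq :
    Tendsto (fun z ↦ z ^ 2 * L.weierstrassP z) (𝓝[≠] 0) (𝓝 1) := by
  have h : Tendsto (fun z : ℂ ↦ z ^ 2 * L.weierstrassPExcept 0 z + 1) (𝓝 0) (𝓝 1) := by
    have : ContinuousAt (fun z : ℂ ↦ z ^ 2 * L.weierstrassPExcept 0 z + 1) 0 := by
      have := (L.analyticAt_weierstrassPExcept 0).continuousAt
      fun_prop
    simpa [ContinuousAt] using this
  refine (h.mono_left nhdsWithin_le_nhds).congr' ?_
  filter_upwards [self_mem_nhdsWithin] with z hz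
  have hz : z ≠ 0 := hz
  rw [weierstrassP_eq_except_zero_add]
  field_simp

/-- No continuous function agrees with `℘` near the pole at the origin. -/
lemma not_eventuallyEq_of_continuousAt {f : ℂ → ℂ} (hf : ContinuousAt f 0) :
    ¬ L.weierstrassP =ᶠ[𝓝[≠] 0] f := by
  intro h
  have h1 : Tendsto (fun z ↦ z ^ 2 * f z) (𝓝[≠] 0) (𝓝 1) :=
    L.tendsto_weierstrassP_mul_sq.congr' (h.mono fun z hz ↦ by rw [hz])
  have h2 : Tendsto (fun z ↦ z ^ 2 * f z) (𝓝[≠] 0) (𝓝 0) := by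
    have : ContinuousAt (fun z ↦ z ^ 2 * f z) 0 := by fun_prop
    simpa using this.tendsto.mono_left nhdsWithin_le_nhds
  exact one_ne_zero (tendsto_nhds_unique h1 h2)

lemma eventually_notMem_lattice_nhdsNE (x : ℂ) : ∀ᶠ z in 𝓝[≠] x, z ∉ L.lattice := by
  filter_upwards [nhdsWithin_le_nhds (L.compl_lattice_sdiff_singleton_mem_nhds x),
    self_mem_nhdsWithin] with z hz hzx hzL
  exact hz ⟨hzL, hzx⟩

lemma eventually_notMem_lattice {x : ℂ} (hx : x ∉ L.lattice) : ∀ᶠ z in 𝓝 x, z ∉ L.lattice :=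
  L.isClosed_lattice.isOpen_compl.mem_nhds hx

lemma hasDerivAt_weierstrassP {z : ℂ} (hz : z ∉ L.lattice) :
    HasDerivAt L.weierstrassP (L.derivWeierstrassP z) z := by
  have := (L.analyticOnNhd_weierstrassP z hz).differentiableAt.hasDerivAt
  rwa [L.deriv_weierstrassP] at this

lemma not_eventually_derivWeierstrassP_eq_zero {z : ℂ} (hz : z ∉ L.lattice) :
    ¬ ∀ᶠ w in 𝓝 z, L.derivWeierstrassP w = 0 := by
  intro h
  have h0 := L.analyticOnNhd_derivWeierstrassP.eqOn_zero_of_preconnected_of_eventuallyEq_zero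
    L.isConnected_compl_lattice.isPreconnected hz h
  obtain ⟨a, ha⟩ := L.isClosed_lattice.isOpen_compl.exists_is_const_of_deriv_eq_zero
    L.isConnected_compl_lattice.isPreconnected L.differentiableOn_weierstrassP
    (by simpa using h0)
  exact L.not_eventuallyEq_of_continuousAt (f := fun _ ↦ a) continuousAt_const
    ((L.eventually_notMem_lattice_nhdsNE 0).mono fun w hw ↦ ha w hw)

/-- The second-order equation `℘'' = 6 ℘² - g₂ / 2`. Differentiating the first-order equation gives
it where `℘' ≠ 0`, and zeros of `℘'` are isolated. -/
lemma deriv_derivWeierstrassP {z : ℂ} (hz : z ∉ L.lattice) :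
    deriv L.derivWeierstrassP z = 6 * L.weierstrassP z ^ 2 - L.g₂ / 2 := by
  have key : ∀ w ∉ L.lattice, L.derivWeierstrassP w ≠ 0 →
      deriv L.derivWeierstrassP w = 6 * L.weierstrassP w ^ 2 - L.g₂ / 2 := by
    intro w hw h0
    have h1 := L.hasDerivAt_weierstrassP hw
    have h2 := (L.analyticOnNhd_derivWeierstrassP w hw).differentiableAt.hasDerivAt
    have h3 : HasDerivAt (fun z ↦ L.derivWeierstrassP z ^ 2) _ w := h2.pow 2
    have h4 := (((h1.pow 3).const_mul 4).sub (h1.const_mul L.g₂)).sub_const L.g₃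
    have h5 := (h4.congr_of_eventuallyEq (f₁ := fun z ↦ L.derivWeierstrassP z ^ 2)
      ((L.eventually_notMem_lattice hw).mono fun v hv ↦ L.derivWeierstrassP_sq v hv)).unique h3
    apply mul_left_cancel₀ h0
    push_cast at h5
    linear_combination -h5 / 2
  have hne := (L.analyticOnNhd_derivWeierstrassP z hz).eventually_eq_zero_or_eventually_ne_zero
    |>.resolve_left (L.not_eventually_derivWeierstrassP_eq_zero hz)
  have hl : Tendsto (deriv L.derivWeierstrassP) (𝓝[≠] z) (𝓝 (deriv L.derivWeierstrassP z)) :=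
    (L.analyticOnNhd_derivWeierstrassP z hz).deriv.continuousAt.tendsto.mono_left
      nhdsWithin_le_nhds
  have hr : Tendsto (fun w ↦ 6 * L.weierstrassP w ^ 2 - L.g₂ / 2) (𝓝[≠] z)
      (𝓝 (6 * L.weierstrassP z ^ 2 - L.g₂ / 2)) := by
    have := (L.analyticOnNhd_weierstrassP z hz).continuousAt
    have : ContinuousAt (fun w ↦ 6 * L.weierstrassP w ^ 2 - L.g₂ / 2) z := by fun_prop
    exact this.tendsto.mono_left nhdsWithin_le_nhds
  refine tendsto_nhds_unique_of_eventuallyEq hl hr ?_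
  filter_upwards [hne, L.eventually_notMem_lattice_nhdsNE z] with w h1 h2 using key w h2 h1

/-- Uniqueness for `d'' = q d` with zero initial data, for analytic functions: a finite order of
vanishing `n` of `d` would give order `n - 2 < n` for `d''`. -/
lemma _root_.AnalyticAt.eventually_eq_zero_of_deriv_deriv {d q : ℂ → ℂ} {x : ℂ}
    (hd : AnalyticAt ℂ d x) (hq : AnalyticAt ℂ q x) (h0 : d x = 0) (h1 : deriv d x = 0)
    (h : deriv (deriv d) =ᶠ[𝓝 x] fun z ↦ q z * d z) : ∀ᶠ z in 𝓝 x, d z = 0 := by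
  rw [← analyticOrderAt_eq_top]
  have e1 : analyticOrderAt (deriv d) x + 1 = analyticOrderAt d x := by
    simpa [h0] using hd.analyticOrderAt_deriv_add_one
  have e2 : analyticOrderAt (deriv (deriv d)) x + 1 = analyticOrderAt (deriv d) x := by
    simpa [h1] using hd.deriv.analyticOrderAt_deriv_add_one
  have e3 : analyticOrderAt (deriv (deriv d)) x = analyticOrderAt q x + analyticOrderAt d x := by
    rw [analyticOrderAt_congr h]
    exact analyticOrderAt_mul hq hd
  by_contra hne
  rw [e3] at e2
  rw [← e2] at e1
  generalize analyticOrderAt q x = m at *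
  generalize analyticOrderAt d x = n at *
  lift n to ℕ using hne
  cases m with
  | top => simp at e1
  | coe m => norm_cast at e1; omega

/-- A point of `ℂ / Λ` is determined by the values of `℘` and `℘'` there: by uniqueness for
`℘'' = 6 ℘² - g₂ / 2`, equal initial data at `a` and `b` make `b - a` a period of `℘`, and the poles
of `℘` are exactly the lattice points. -/
lemma sub_mem_lattice_of_eq {a b : ℂ} (ha : a ∉ L.lattice) (hb : b ∉ L.lattice)
    (h : L.weierstrassP a = L.weierstrassP b)
    (h' : L.derivWeierstrassP a = L.derivWeierstrassP b) : b - a ∈ L.lattice := by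
  set c := b - a with hc
  have hbc : a + c = b := by rw [hc]; ring
  have hs : ∀ z, z + c ∉ L.lattice → AnalyticAt ℂ (fun z ↦ L.weierstrassP (z + c)) z :=
    fun z hz ↦ (L.analyticOnNhd_weierstrassP (z + c) hz).comp_of_eq (f := fun z ↦ z + c)
      (by fun_prop) rfl
  have hevb : ∀ᶠ z in 𝓝 a, z + c ∉ L.lattice := by
    have : Tendsto (fun z ↦ z + c) (𝓝 a) (𝓝 b) := by
      rw [← hbc]; exact (continuous_id.add continuous_const).tendsto a
    exact this.eventually (L.eventually_notMem_lattice hb)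
  have hpa := L.analyticOnNhd_weierstrassP a ha
  have hpb := hs a (by rwa [hbc])
  have hd1 : ∀ z ∉ L.lattice, z + c ∉ L.lattice →
      HasDerivAt (fun z ↦ L.weierstrassP z - L.weierstrassP (z + c))
        (L.derivWeierstrassP z - L.derivWeierstrassP (z + c)) z := fun z hz hzc ↦
    (L.hasDerivAt_weierstrassP hz).sub ((L.hasDerivAt_weierstrassP hzc).comp_add_const z c)
  have hd2 : ∀ z ∉ L.lattice, z + c ∉ L.lattice →
      HasDerivAt (fun z ↦ L.derivWeierstrassP z - L.derivWeierstrassP (z + c))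
        (deriv L.derivWeierstrassP z - deriv L.derivWeierstrassP (z + c)) z := fun z hz hzc ↦
    (L.analyticOnNhd_derivWeierstrassP z hz).differentiableAt.hasDerivAt.sub
      ((L.analyticOnNhd_derivWeierstrassP _ hzc).differentiableAt.hasDerivAt.comp_add_const z c)
  have hloc : ∀ᶠ z in 𝓝 a, L.weierstrassP z - L.weierstrassP (z + c) = 0 := by
    refine AnalyticAt.eventually_eq_zero_of_deriv_deriv
      (q := fun z ↦ 6 * (L.weierstrassP z + L.weierstrassP (z + c)))
      (hpa.sub hpb) (by fun_prop) (by simp [hbc, h]) ?_ ?_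
    · rw [(hd1 a ha (by rwa [hbc])).deriv, hbc, h', sub_self]
    · have e1 : deriv (fun z ↦ L.weierstrassP z - L.weierstrassP (z + c)) =ᶠ[𝓝 a]
          fun z ↦ L.derivWeierstrassP z - L.derivWeierstrassP (z + c) := by
        filter_upwards [hevb, L.eventually_notMem_lattice ha] with z h1 h2
        exact (hd1 z h2 h1).deriv
      filter_upwards [e1.deriv, hevb, L.eventually_notMem_lattice ha] with z h0 h1 h2
      rw [h0, (hd2 z h2 h1).deriv, L.deriv_derivWeierstrassP h2, L.deriv_derivWeierstrassP h1]
      ring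
  set U : Set ℂ := ((L.lattice : Set ℂ) ∪ (· + c) ⁻¹' (L.lattice : Set ℂ))ᶜ with hU
  have hUc : IsPreconnected U := by
    refine (Set.Countable.isConnected_compl_of_one_lt_rank (by simp) ?_).isPreconnected
    exact L.countable_lattice_set.union
      (L.countable_lattice_set.preimage (add_left_injective c))
  have hUmem : ∀ z, z ∈ U ↔ z ∉ L.lattice ∧ z + c ∉ L.lattice := by simp [hU]
  have hE : Set.EqOn L.weierstrassP (fun z ↦ L.weierstrassP (z + c)) U := by
    refine AnalyticOnNhd.eqOn_of_preconnected_of_eventuallyEq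
      (fun z hz ↦ L.analyticOnNhd_weierstrassP z ((hUmem z).1 hz).1)
      (fun z hz ↦ hs z ((hUmem z).1 hz).2) hUc ((hUmem a).2 ⟨ha, by rwa [hbc]⟩)
      (hloc.mono fun z hz ↦ sub_eq_zero.1 hz)
  -- If `c` is not a lattice point, `℘ (z + c)` is continuous at the pole `z = 0` of `℘`.
  by_contra hcL
  have hc0 : (0 : ℂ) + c ∉ L.lattice := by rwa [zero_add]
  refine L.not_eventuallyEq_of_continuousAt (hs 0 hc0).continuousAt ?_
  have hcont : Tendsto (fun z ↦ z + c) (𝓝[≠] 0) (𝓝 c) := by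
    have : Tendsto (fun z ↦ z + c) (𝓝 0) (𝓝 (0 + c)) :=
      (continuous_id.add continuous_const).tendsto 0
    rw [zero_add] at this
    exact this.mono_left nhdsWithin_le_nhds
  filter_upwards [L.eventually_notMem_lattice_nhdsNE 0,
    hcont.eventually (L.eventually_notMem_lattice hcL)] with z h1 h2
  exact hE ((hUmem z).2 ⟨h1, h2⟩)

/-- At a half-period `c` the value `℘ c` is attained at no other point of `ℂ / Λ`: the first-order
equation forces `℘' = 0` wherever `℘ = ℘ c`. -/
lemma sub_mem_lattice_of_eq_half_period {c z : ℂ} (hc : c ∉ L.lattice) (h2c : 2 * c ∈ L.lattice)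
    (hz : z ∉ L.lattice) (h : L.weierstrassP z = L.weierstrassP c) : z - c ∈ L.lattice := by
  have h0 : L.derivWeierstrassP c = 0 := by
    have h1 := L.derivWeierstrassP_add_coe (-c) ⟨2 * c, h2c⟩
    rw [L.derivWeierstrassP_neg, show -c + (2 * c) = c by ring] at h1
    exact CharZero.eq_neg_self_iff.1 h1
  have h1 : L.derivWeierstrassP z = 0 := by
    have e1 := L.derivWeierstrassP_sq z hz
    rw [h, ← L.derivWeierstrassP_sq c hc, h0] at e1
    simpa using e1
  exact L.sub_mem_lattice_of_eq hc hz h.symm (h0.trans h1.symm)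

end PeriodPair

/-! ### The rectangular lattice -/

/-- The period pair `(2ω, 2πi)`, which spans `Λ`. -/
def rectPair (ω : ℝ) (hω : 0 < ω) : PeriodPair where
  ω₁ := 2 * ω
  ω₂ := 2 * (Real.pi * I)
  indep := by
    rw [LinearIndependent.pair_iff]
    intro s t h
    have h1 := congrArg re h
    have h2 := congrArg im h
    simp [hω.ne', Real.pi_ne_zero] at h1 h2
    exact ⟨h1, h2⟩

lemma ne_two_mul {p : ℝ} (hp : 0 < p) (m : ℤ) : p ≠ 2 * m * p := by
  intro h
  have h2 : (1 : ℝ) = 2 * m := mul_right_cancel₀ hp.ne' (by simpa using h)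
  norm_cast at h2
  omega

lemma not_mem_Ioc {p : ℝ} (hp : 0 < p) (m : ℤ) : 2 * m * p ∉ Set.Ioc 0 p := by
  rintro ⟨h1, h2⟩
  have h3 : (0 : ℝ) < 2 * m := pos_of_mul_pos_left h1 hp.le
  have h4 : (2 * m : ℝ) ≤ 1 := le_of_mul_le_mul_right (by simpa using h2) hp
  norm_cast at h3 h4
  omega

section
open scoped ComplexConjugate
variable {ω : ℝ}

lemma mem_rectPair_lattice (hω : 0 < ω) {z : ℂ} : z ∈ (rectPair ω hω).lattice ↔
    ∃ m n : ℤ, z.re = 2 * m * ω ∧ z.im = 2 * n * Real.pi := by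
  rw [PeriodPair.mem_lattice]
  refine exists_congr fun m ↦ exists_congr fun n ↦ ?_
  rw [Complex.ext_iff]
  simp [rectPair, eq_comm, mul_assoc, mul_comm, mul_left_comm]

lemma mem_latticeΛ_iff (hω : 0 < ω) {z : ℂ} : z ∈ latticeΛ ω ↔ z ∈ (rectPair ω hω).lattice := by
  rw [mem_rectPair_lattice]
  refine exists_congr fun m ↦ exists_congr fun n ↦ ?_
  rw [Complex.ext_iff]
  simp [mul_assoc]

lemma wp_eq_weierstrassP (hω : 0 < ω) (z : ℂ) : wp ω z = (rectPair ω hω).weierstrassP z := by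
  rw [PeriodPair.weierstrassP_eq_except_zero_add, wp, add_comm, PeriodPair.weierstrassPExcept]
  congr 1
  let e : {w : ℂ // w ∈ latticeΛ ω ∧ w ≠ 0} → (rectPair ω hω).lattice :=
    fun w ↦ ⟨w, (mem_latticeΛ_iff hω).1 w.2.1⟩
  have he : Function.Injective e := fun a b h ↦
    Subtype.ext (show (a : ℂ) = b from congrArg (fun l : (rectPair ω hω).lattice ↦ (l : ℂ)) h)
  have := he.tsum_eq (f := fun l : (rectPair ω hω).lattice ↦
    if (l : ℂ) = 0 then 0 else 1 / (z - l) ^ 2 - 1 / (l : ℂ) ^ 2) (by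
      intro l hl
      have hl0 : (l : ℂ) ≠ 0 := fun h ↦ hl (if_pos h)
      exact ⟨⟨l, (mem_latticeΛ_iff hω).2 l.2, hl0⟩, rfl⟩)
  rw [← this]
  refine tsum_congr fun w ↦ ?_
  rw [if_neg w.2.2]

/-! ### Symmetries -/

lemma wp_neg (hω : 0 < ω) (z : ℂ) : wp ω (-z) = wp ω z := by
  rw [wp_eq_weierstrassP hω, wp_eq_weierstrassP hω, PeriodPair.weierstrassP_neg]

lemma wp_add_of_mem (hω : 0 < ω) {l : ℂ} (hl : l ∈ (rectPair ω hω).lattice) (z : ℂ) :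
    wp ω (z + l) = wp ω z := by
  rw [wp_eq_weierstrassP hω, wp_eq_weierstrassP hω]
  exact (rectPair ω hω).weierstrassP_add_coe z ⟨l, hl⟩

lemma wp_conj (hω : 0 < ω) (z : ℂ) : wp ω (conj z) = conj (wp ω z) := by
  rw [wp_eq_weierstrassP hω, wp_eq_weierstrassP hω, PeriodPair.weierstrassP,
    PeriodPair.weierstrassP, Complex.conj_tsum]
  have hmem : ∀ l ∈ (rectPair ω hω).lattice, conj l ∈ (rectPair ω hω).lattice := by
    intro l hl
    obtain ⟨m, n, h1, h2⟩ := (mem_rectPair_lattice hω).1 hl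
    exact (mem_rectPair_lattice hω).2 ⟨m, -n, by simpa using h1, by simp [h2]⟩
  let e : (rectPair ω hω).lattice ≃ (rectPair ω hω).lattice :=
    { toFun := fun l ↦ ⟨conj (l : ℂ), hmem l l.2⟩
      invFun := fun l ↦ ⟨conj (l : ℂ), hmem l l.2⟩
      left_inv := fun l ↦ by simp
      right_inv := fun l ↦ by simp }
  rw [← e.tsum_eq]
  refine tsum_congr fun l ↦ ?_
  simp [e]

/-- `℘` is real on the vertical lines `re z ∈ ω ℤ`. -/
lemma wp_im_eq_zero_of_re (hω : 0 < ω) {z : ℂ} (m : ℤ) (h : z.re = m * ω) : (wp ω z).im = 0 := by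
  have e : conj z = -z + ((2 * m * ω : ℝ) : ℂ) := by
    apply Complex.ext
    · simp [h]; ring
    · simp
  rw [← Complex.conj_eq_iff_im, ← wp_conj hω, e, wp_add_of_mem hω, wp_neg hω]
  exact (mem_rectPair_lattice hω).2 ⟨m, 0, by simp, by simp⟩

/-- `℘` is real on the horizontal lines `im z ∈ π ℤ`. -/
lemma wp_im_eq_zero_of_im (hω : 0 < ω) {z : ℂ} (n : ℤ) (h : z.im = n * Real.pi) : (wp ω z).im = 0 := by
  have e : conj z = z + ((-2 * n * Real.pi : ℝ) : ℂ) * I := by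
    apply Complex.ext
    · simp
    · simp [h]; ring
  rw [← Complex.conj_eq_iff_im, ← wp_conj hω, e, wp_add_of_mem hω]
  exact (mem_rectPair_lattice hω).2 ⟨0, -n, by simp, by simp⟩

/-! ### Signs along the boundary of the half-period rectangle -/

/-- If `℘` is real on a connected set avoiding `Λ` and `ω + πi + Λ`, then its values there omit `e₂`
and hence all lie on the same side of `e₂`. -/
lemma wp_same_side (hω : 0 < ω) {S : Set ℂ} (hS : IsPreconnected S)
    (hL : ∀ z ∈ S, z ∉ (rectPair ω hω).lattice)
    (hc : ∀ z ∈ S, z - (ω + Real.pi * I) ∉ (rectPair ω hω).lattice)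
    (him : ∀ z ∈ S, (wp ω z).im = 0) {x y : ℂ} (hx : x ∈ S) (hy : y ∈ S) :
    ((wp ω (ω + Real.pi * I)).re < (wp ω x).re → (wp ω (ω + Real.pi * I)).re < (wp ω y).re) ∧
    ((wp ω x).re < (wp ω (ω + Real.pi * I)).re → (wp ω y).re < (wp ω (ω + Real.pi * I)).re) := by
  have hcont : ContinuousOn (fun z ↦ (wp ω z).re) S := by
    refine Complex.continuous_re.comp_continuousOn fun z hz ↦ ?_
    rw [show wp ω = (rectPair ω hω).weierstrassP from funext (wp_eq_weierstrassP hω)]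
    exact ((rectPair ω hω).analyticOnNhd_weierstrassP z (hL z hz)).continuousAt.continuousWithinAt
  have homit : ∀ z ∈ S, (wp ω z).re ≠ (wp ω (ω + Real.pi * I)).re := by
    intro z hz hze
    have hcim : (wp ω (ω + Real.pi * I)).im = 0 := wp_im_eq_zero_of_im hω 1 (by simp)
    have hval : wp ω z = wp ω (ω + Real.pi * I) := Complex.ext hze ((him z hz).trans hcim.symm)
    rw [wp_eq_weierstrassP hω, wp_eq_weierstrassP hω] at hval
    refine hc z hz (PeriodPair.sub_mem_lattice_of_eq_half_period _ ?_ ?_ (hL z hz) hval)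
    · rw [mem_rectPair_lattice]
      rintro ⟨m, n, h1, -⟩
      exact ne_two_mul hω m (by simpa using h1)
    · exact (mem_rectPair_lattice hω).2 ⟨1, 1, by simp, by simp⟩
  constructor <;> intro h <;> by_contra! hle
  · obtain ⟨z, hz, hze⟩ := hS.intermediate_value hy hx hcont ⟨hle, h.le⟩
    exact homit z hz hze
  · obtain ⟨z, hz, hze⟩ := hS.intermediate_value hx hy hcont ⟨h.le, hle⟩
    exact homit z hz hze

/-- The behaviour `℘(z) ~ 1 / z²` at the origin, along the ray in direction `u`. -/
lemma tendsto_sq_mul_wp (hω : 0 < ω) {u : ℂ} (hu : u ≠ 0) :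
    Tendsto (fun s : ℝ ↦ (u ^ 2 * wp ω (s * u)).re * s ^ 2) (𝓝[>] 0) (𝓝 1) := by
  have h1 : Tendsto (fun s : ℝ ↦ (s : ℂ) * u) (𝓝[>] 0) (𝓝[≠] 0) := by
    refine tendsto_nhdsWithin_iff.2 ⟨?_, ?_⟩
    · have : Continuous (fun s : ℝ ↦ (s : ℂ) * u) := by fun_prop
      simpa using (this.tendsto 0).mono_left nhdsWithin_le_nhds
    · filter_upwards [self_mem_nhdsWithin] with s hs
      exact mul_ne_zero (by exact_mod_cast (Set.mem_Ioi.1 hs).ne') hu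
  have h2 := (Complex.continuous_re.tendsto 1).comp
    ((rectPair ω hω).tendsto_weierstrassP_mul_sq.comp h1)
  refine (by simpa using h2 : Tendsto _ _ (𝓝 (1 : ℝ))).congr fun s ↦ ?_
  simp only [Function.comp, wp_eq_weierstrassP hω]
  rw [← Complex.re_mul_ofReal]
  push_cast
  congr 1
  ring

lemma eventually_mul_sq_lt (a : ℝ) : ∀ᶠ s : ℝ in 𝓝[>] 0, a * s ^ 2 < 1 / 2 := by
  have : Continuous fun s : ℝ ↦ a * s ^ 2 := by fun_prop
  have h := (this.tendsto 0).mono_left (nhdsWithin_le_nhds (s := Set.Ioi 0))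
  exact h.eventually_lt_const (by norm_num)

lemma exists_lt_wp_real (hω : 0 < ω) (a : ℝ) : ∃ s ∈ Set.Ioc 0 ω, a < (wp ω (s : ℝ)).re := by
  have h := (tendsto_sq_mul_wp hω one_ne_zero).eventually_const_lt
    (show (1 / 2 : ℝ) < 1 by norm_num)
  obtain ⟨s, h1, h2, h3⟩ := (h.and ((eventually_mul_sq_lt a).and
    (Ioc_mem_nhdsGT hω))).exists
  refine ⟨s, h3, lt_of_mul_lt_mul_right (h2.trans ?_) (sq_nonneg s)⟩
  simpa using h1

lemma exists_wp_imag_lt (hω : 0 < ω) (a : ℝ) : ∃ t ∈ Set.Ioc 0 Real.pi, (wp ω ((t : ℝ) * I)).re < a := by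
  have h := (tendsto_sq_mul_wp hω I_ne_zero).eventually_const_lt
    (show (1 / 2 : ℝ) < 1 by norm_num)
  obtain ⟨t, h1, h2, h3⟩ := (h.and ((eventually_mul_sq_lt (-a)).and
    (Ioc_mem_nhdsGT Real.pi_pos))).exists
  refine ⟨t, h3, lt_of_mul_lt_mul_right (a := t ^ 2) ?_ (sq_nonneg t)⟩
  simp at h1
  linarith

/-- `℘ > e₂` on the segment from `ω` to `ω + πi`, endpoint excluded. -/
lemma e₂_lt_wp (hω : 0 < ω) {t : ℝ} (ht : t ∈ Set.Ico 0 Real.pi) :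
    (wp ω (ω + Real.pi * I)).re < (wp ω (ω + t * I)).re := by
  set S : Set ℂ := (fun s : ℝ ↦ (s : ℂ)) '' Set.Ioc 0 ω ∪
    (fun t : ℝ ↦ (ω : ℂ) + t * I) '' Set.Ico 0 Real.pi
  have hS : IsPreconnected S := by
    refine IsPreconnected.union (ω : ℂ) ⟨ω, ⟨hω, le_rfl⟩, rfl⟩
      ⟨0, ⟨le_rfl, Real.pi_pos⟩, by simp⟩ ?_ ?_
    · exact isPreconnected_Ioc.image _ (by fun_prop)
    · exact isPreconnected_Ico.image _ (by fun_prop)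
  obtain ⟨s, hs, hlt⟩ := exists_lt_wp_real hω (wp ω (ω + Real.pi * I)).re
  refine wp_same_side hω hS ?_ ?_ ?_ (.inl ⟨s, hs, rfl⟩) (.inr ⟨t, ht, rfl⟩) |>.1 hlt
  · rintro _ (⟨s, ⟨hs0, hs1⟩, rfl⟩ | ⟨t, ⟨ht0, ht1⟩, rfl⟩) <;> rw [mem_rectPair_lattice] <;>
      rintro ⟨m, n, h1, h2⟩ <;> simp at h1 h2
    · exact not_mem_Ioc hω m (h1 ▸ ⟨hs0, hs1⟩)
    · exact ne_two_mul hω m h1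
  · rintro _ (⟨s, ⟨hs0, hs1⟩, rfl⟩ | ⟨t, ⟨ht0, ht1⟩, rfl⟩) <;> rw [mem_rectPair_lattice] <;>
      rintro ⟨m, n, h1, h2⟩ <;> simp at h1 h2
    · exact ne_two_mul Real.pi_pos (-n) (by push_cast; linarith)
    · refine not_mem_Ioc Real.pi_pos (-n) ⟨?_, ?_⟩ <;> push_cast <;> linarith
  · rintro _ (⟨s, -, rfl⟩ | ⟨t, -, rfl⟩)
    · exact wp_im_eq_zero_of_im hω 0 (by simp)
    · exact wp_im_eq_zero_of_re hω 1 (by simp)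

/-- `℘ < e₂` on the segment from `πi` to `ω + πi`, endpoint excluded. -/
lemma wp_lt_e₂ (hω : 0 < ω) {s : ℝ} (hs : s ∈ Set.Ico 0 ω) :
    (wp ω (s + Real.pi * I)).re < (wp ω (ω + Real.pi * I)).re := by
  set S : Set ℂ := (fun t : ℝ ↦ (t : ℂ) * I) '' Set.Ioc 0 Real.pi ∪
    (fun s : ℝ ↦ (s : ℂ) + Real.pi * I) '' Set.Ico 0 ω
  have hS : IsPreconnected S := by
    refine IsPreconnected.union (Real.pi * I : ℂ) ⟨Real.pi, ⟨Real.pi_pos, le_rfl⟩, rfl⟩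
      ⟨0, ⟨le_rfl, hω⟩, by simp⟩ ?_ ?_
    · exact isPreconnected_Ioc.image _ (by fun_prop)
    · exact isPreconnected_Ico.image _ (by fun_prop)
  have hL : ∀ z ∈ S, z ∉ (rectPair ω hω).lattice := by
    rintro _ (⟨t, ⟨ht0, ht1⟩, rfl⟩ | ⟨s, ⟨hs0, hs1⟩, rfl⟩) <;> rw [mem_rectPair_lattice] <;>
      rintro ⟨m, n, h1, h2⟩ <;> simp at h1 h2
    · exact not_mem_Ioc Real.pi_pos n (h2 ▸ ⟨ht0, ht1⟩)
    · norm_cast at h2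
      omega
  have hc : ∀ z ∈ S, z - (ω + Real.pi * I) ∉ (rectPair ω hω).lattice := by
    rintro _ (⟨t, ⟨ht0, ht1⟩, rfl⟩ | ⟨s, ⟨hs0, hs1⟩, rfl⟩) <;> rw [mem_rectPair_lattice] <;>
      rintro ⟨m, n, h1, h2⟩ <;> simp at h1 h2
    · exact ne_two_mul hω (-m) (by push_cast; linarith)
    · refine not_mem_Ioc hω (-m) ⟨?_, ?_⟩ <;> push_cast <;> linarith
  have him : ∀ z ∈ S, (wp ω z).im = 0 := by
    rintro _ (⟨t, -, rfl⟩ | ⟨s, -, rfl⟩)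
    · exact wp_im_eq_zero_of_re hω 0 (by simp)
    · exact wp_im_eq_zero_of_im hω 1 (by simp)
  obtain ⟨t, ht, hlt⟩ := exists_wp_imag_lt hω (wp ω (ω + Real.pi * I)).re
  have htS : (t : ℂ) * I ∈ S := .inl ⟨t, ht, rfl⟩
  have hsS : (s : ℂ) + Real.pi * I ∈ S := .inr ⟨s, hs, rfl⟩
  exact (wp_same_side hω hS hL hc him htS hsS).2 hlt

end

end

/-- `P` is real on `[0,ω]` and on `i[0,π]`; moreover `P(σ) < 0` for
`σ ∈ (0,ω]` and `P(it) > 0` for `t ∈ (0,π]`. -/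
theorem Pfun_sign (ω : ℝ) (hω : 0 < ω) :
    (∀ σ : ℝ, σ ∈ Set.Icc 0 ω → (Pfun ω σ).im = 0) ∧
    (∀ t : ℝ, t ∈ Set.Icc 0 Real.pi → (Pfun ω (t * Complex.I)).im = 0) ∧
    (∀ σ : ℝ, σ ∈ Set.Ioc 0 ω → (Pfun ω σ).re < 0) ∧
    (∀ t : ℝ, t ∈ Set.Ioc 0 Real.pi → 0 < (Pfun ω (t * Complex.I)).re) := by
  refine ⟨fun σ _ ↦ ?_, fun t _ ↦ ?_, fun σ hσ ↦ ?_, fun t ht ↦ ?_⟩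
  · have h1 := wp_im_eq_zero_of_im hω (z := σ + ω + Real.pi * I) 1 (by simp)
    have h2 := wp_im_eq_zero_of_im hω (z := ω + Real.pi * I) 1 (by simp)
    simp [Pfun, h1, h2]
  · have h1 := wp_im_eq_zero_of_re hω (z := t * I + ω + Real.pi * I) 1 (by simp)
    have h2 := wp_im_eq_zero_of_re hω (z := ω + Real.pi * I) 1 (by simp)
    simp [Pfun, h1, h2]
  -- The reflection `z ↦ 2ω + 2πi - z` preserves `℘` and moves the arguments onto the paths above.
  · have h := wp_lt_e₂ hω (s := ω - σ) ⟨by linarith [hσ.2], by linarith [hσ.1]⟩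
    have hl : (2 * ω + 2 * (Real.pi * I) : ℂ) ∈ (rectPair ω hω).lattice :=
      (mem_rectPair_lattice hω).2 ⟨1, 1, by simp, by simp⟩
    have e : wp ω (σ + ω + Real.pi * I) = wp ω ((ω - σ : ℝ) + Real.pi * I) := by
      rw [← wp_neg hω, ← wp_add_of_mem hω hl]
      congr 1
      push_cast
      ring
    rw [Pfun, e, Complex.div_ofNat_re, Complex.sub_re]
    linarith
  · have h := e₂_lt_wp hω (t := Real.pi - t) ⟨by linarith [ht.2], by linarith [ht.1]⟩
    have hl : (2 * ω + 2 * (Real.pi * I) : ℂ) ∈ (rectPair ω hω).lattice :=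
      (mem_rectPair_lattice hω).2 ⟨1, 1, by simp, by simp⟩
    have e : wp ω (t * I + ω + Real.pi * I) = wp ω (ω + (Real.pi - t : ℝ) * I) := by
      rw [← wp_neg hω, ← wp_add_of_mem hω hl]
      congr 1
      push_cast
      ring
    rw [Pfun, e, Complex.div_ofNat_re, Complex.sub_re]
    linarith
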